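/- arXiv:2301.03739 — 2 statements merged into one kernel-verified Lean document; each statement's English description precedes it below -/
import Mathlib

section
/- Let R be an acyclic self-relation on a finite set X with Dom R = X, and let j ≥ 1 satisfy R^j = R^{j+1}. Then the number of connected components of the directed graph G_R equals the number of connected components of the Dowker complex K_{R^j}: the equivalence relation on X generated by R coincides with the reflexive-transitive closure of the edge relation E of K_{R^j}, where E a b ↔ ∃ y, R^j a y ∧ R^j b y. That is, for all x, x' ∈ X, EqvGen R x x' holds if and only if ReflTransGen E x x' holds. -/
/-- The Dowker complex `K_R` of a relation `R : X → Y → Prop`: the set of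
nonempty finite subsets `σ ⊆ X` such that there is a `y` with `R x y` for all `x ∈ σ`. -/
def dowkerK {X Y : Type*} (R : X → Y → Prop) : Set (Finset X) :=
  {σ | σ.Nonempty ∧ ∃ y, ∀ x ∈ σ, R x y}

/-- The Dowker complex `L_R` of a relation `R : X → Y → Prop`: the set of
nonempty finite subsets `τ ⊆ Y` such that there is an `x` with `R x y` for all `y ∈ τ`. -/
def dowkerL {X Y : Type*} (R : X → Y → Prop) : Set (Finset Y) :=
  {τ | τ.Nonempty ∧ ∃ x, ∀ y ∈ τ, R x y}

/-- Composition of relations: `relComp R₁ R₂` is the paper's `R₂ ∘ R₁`,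
i.e. `(R₂ ∘ R₁) x z ↔ ∃ y, R₁ x y ∧ R₂ y z`. -/
def relComp {X Y Z : Type*} (R₁ : X → Y → Prop) (R₂ : Y → Z → Prop) : X → Z → Prop :=
  fun x z => ∃ y, R₁ x y ∧ R₂ y z

/-- Powers of a self-relation: `R^0` is equality and `R^(n+1) = R ∘ R^n`. -/
def relPow {X : Type*} (R : X → X → Prop) : ℕ → X → X → Prop
  | 0 => Eq
  | n + 1 => relComp (relPow R n) R

/-!
Every vertex starts a directed path of length `j`. Given an edge `R a b` and such a path from `b`
to `c`, prepending the edge yields a path of length `j + 1` from `a` to `c`, hence one of length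
`j` because `R^(j+1) ≤ R^j`. So `a` and `b` have the common `R^j`-successor `c`, that is, `{a, b}`
is a simplex of the Dowker complex `K_{R^j}`, whose edge relation is `Join (relPow R j)`.
Conversely, the vertices of an edge of `K_{R^j}` are both joined by directed paths to a common
vertex.
-/

open Relation Relator

section JoinClosure

variable {X : Type*} {R S : X → X → Prop}

theorem le_join_of_relComp_le (hS : LeftTotal S) (hRS : relComp R S ≤ S) : R ≤ Join S := by
  intro a b hab
  obtain ⟨c, hbc⟩ := hS b
  exact ⟨c, hRS a c ⟨b, hab, hbc⟩, hbc⟩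

theorem eqvGen_eq_reflTransGen_join (hS : LeftTotal S) (hRS : relComp R S ≤ S)
    (hSR : S ≤ EqvGen R) : EqvGen R = ReflTransGen (Join S) := by
  have hJoin : Join S ≤ EqvGen R :=
    join_le_of_equivalence_of_le (EqvGen.is_equivalence R) hSR
  calc
    EqvGen R = EqvGen (Join S) :=
      le_antisymm (EqvGen.eqvGen_mono (le_join_of_relComp_le hS hRS)) (EqvGen.eqvGen_le hJoin)
    _ = ReflTransGen (Join S) := EqvGen.eqvGen_eq_reflTransGen _

end JoinClosure

section RelPow

variable {X : Type*}

theorem relPow_succ' (R : X → X → Prop) (n : ℕ) :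
    relPow R (n + 1) = relComp R (relPow R n) := by
  induction n with
  | zero => exact eq_comp.trans comp_eq.symm
  | succ n ih =>
    calc
      relPow R (n + 2) = relComp (relComp R (relPow R n)) R := congrArg (relComp · R) ih
      _ = relComp R (relPow R (n + 1)) := comp_assoc

theorem leftTotal_relPow {R : X → X → Prop} (hR : LeftTotal R) (n : ℕ) :
    LeftTotal (relPow R n) := by
  induction n with
  | zero => exact LeftTotal.refl fun _ => rfl
  | succ n ih => exact LeftTotal.trans (fun _ b _ hab hbc => ⟨b, hab, hbc⟩) ih hR

theorem relPow_le_reflTransGen (R : X → X → Prop) (n : ℕ) : relPow R n ≤ ReflTransGen R := by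
  induction n with
  | zero => exact fun _ _ h => h ▸ .refl
  | succ n ih => exact fun a _ ⟨b, hab, hbc⟩ => (ih a b hab).tail hbc

end RelPow

theorem stmt12_general {X : Type*} {R : X → X → Prop} (hDom : LeftTotal R) {j : ℕ}
    (hstab : relPow R (j + 1) ≤ relPow R j) :
    EqvGen R = ReflTransGen (Join (relPow R j)) := by
  have prepend_le : relComp R (relPow R j) ≤ relPow R j := relPow_succ' R j ▸ hstab
  have relPow_le : relPow R j ≤ EqvGen R :=
    (relPow_le_reflTransGen R j).trans (EqvGen.reflTransGen_le_eqvGen R)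
  exact eqvGen_eq_reflTransGen_join (leftTotal_relPow hDom j) prepend_le relPow_le

theorem stmt12 {X : Type*} [Fintype X] (R : X → X → Prop)
    (hDom : ∀ x, ∃ y, R x y)
    (hacyclic : ∀ x y, ∀ m n : ℕ, 1 ≤ m → 1 ≤ n →
      relPow R m x y → relPow R n y x → x = y)
    (j : ℕ) (hj : 1 ≤ j) (hstab : relPow R j = relPow R (j + 1)) :
    ∀ x x' : X, Relation.EqvGen R x x' ↔
      Relation.ReflTransGen (fun a b => ∃ y, relPow R j a y ∧ relPow R j b y) x x' :=
  fun x x' => Iff.of_eq (congrFun₂ (stmt12_general hDom hstab.ge) x x')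
end

section
/- Let R be a strongly connected self-relation on a finite nonempty set X, let j be the least positive integer such that R^j = R^{j+p} for some p ≥ 1, and let q ≥ 1 be the greatest common divisor of the cycle lengths of R (i.e. q divides every n ≥ 1 for which there exists x with R^n x x, and every d with this property divides q). Define x ∼_q y to mean that every walk from x to y has length divisible by q, i.e. for all n, R^n x y implies q ∣ n. Then: (i) for all x, y ∈ X, x ∼_q y holds if and only if x and y are edge-connected in K_{R^j}, i.e. ReflTransGen E x y where E a b ↔ ∃ z, R^j a z ∧ R^j b z; and (ii) there are exactly q classes: there exists a surjection f : X → Fin q such that f x = f y if and only if x ∼_q y. -/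
/-
Fix a base point `x₀` and send `x` to the length, modulo the period `q`, of any walk from `x₀` to
`x`. This phase is well defined because two walks with common endpoints close up to cycles with the
same return walk, and a walk of length `n` shifts it by `n`. So the fibres of the phase are the
classes of `∼_q`, every residue is attained, and vertices with a common `R^j`-successor have equal
phase. Conversely, the lengths of the closed walks at a vertex form a numerical semigroup with gcd
`q`, which contains all large multiples of `q`. Hence equivalent vertices have a common
`R^n`-successor for all large `n`, and by periodicity of the powers of `R` also for `n = j`. In
particular each connected component of `K_{R^j}` already has a complete edge graph.
-/

section CyclicClasses

open Filter Relation

variable {X : Type*} {R : X → X → Prop} {j m n p q : ℕ} {x y z : X}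

theorem relPow_add (R : X → X → Prop) (m n : ℕ) :
    relPow R (m + n) = relComp (relPow R m) (relPow R n) := by
  induction n with
  | zero => exact comp_eq.symm
  | succ n ih =>
    calc relPow R (m + (n + 1))
        = relComp (relPow R (m + n)) R := rfl
      _ = relComp (relComp (relPow R m) (relPow R n)) R := by rw [ih]
      _ = relComp (relPow R m) (relPow R (n + 1)) := comp_assoc

theorem relPow_trans (hxy : relPow R m x y) (hyz : relPow R n y z) : relPow R (m + n) x z := by
  rw [relPow_add]
  exact ⟨y, hxy, hyz⟩

theorem relPow_add_mul_of_periodic (hper : relPow R j = relPow R (j + p)) (k : ℕ) :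
    relPow R (j + k * p) = relPow R j := by
  induction k with
  | zero => rw [zero_mul, add_zero]
  | succ k ih =>
    rw [add_one_mul, add_comm (k * p), ← add_assoc, relPow_add, ← hper, ← relPow_add, ih]

/-- The lengths of the closed walks at `x`, the trivial walk of length `0` included. -/
def closedWalkLengths (R : X → X → Prop) (x : X) : AddSubmonoid ℕ where
  carrier := {n | relPow R n x x}
  zero_mem' := rfl
  add_mem' := relPow_trans

/-- The period of `R`: the greatest common divisor of all its cycle lengths, which is `0` when `R`
has no cycle. Length `0` is allowed here, since it does not affect the greatest common divisor. -/
noncomputable def cyclePeriod (R : X → X → Prop) : ℕ :=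
  Nat.setGcd {n | ∃ x, relPow R n x x}

theorem cyclePeriod_dvd (hn : relPow R n x x) : cyclePeriod R ∣ n :=
  Nat.setGcd_dvd_of_mem ⟨x, hn⟩

theorem eq_cyclePeriod (hdvd : ∀ n, 1 ≤ n → (∃ x, relPow R n x x) → q ∣ n)
    (hmax : ∀ d, (∀ n, 1 ≤ n → (∃ x, relPow R n x x) → d ∣ n) → d ∣ q) :
    q = cyclePeriod R := by
  refine Nat.dvd_antisymm (Nat.dvd_setGcd_iff.2 fun n hn => ?_)
    (hmax _ fun n _ ⟨_, hn⟩ => cyclePeriod_dvd hn)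
  rcases n.eq_zero_or_pos with rfl | hpos
  · exact dvd_zero q
  · exact hdvd n hpos hn

/-- Strong connectedness: every two vertices are joined by a walk. Positive length is required, so
that every vertex lies on a cycle. -/
def IsStronglyConnected (R : X → X → Prop) : Prop :=
  ∀ x y, ∃ n, 1 ≤ n ∧ relPow R n x y

/-- The relation `x ∼_q y`, for `q` the period of `R`, on the vertices of a strongly connected `R`:
all walks from `x` to `y`, hence also all those back, have length divisible by `q`. -/
def SameCyclicClass (R : X → X → Prop) (x y : X) : Prop :=
  ∀ n, relPow R n x y → cyclePeriod R ∣ n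

namespace IsStronglyConnected

theorem cyclePeriod_pos [Nonempty X] (hR : IsStronglyConnected R) : 0 < cyclePeriod R := by
  obtain ⟨x⟩ := ‹Nonempty X›
  obtain ⟨n, hn, hx⟩ := hR x x
  exact Nat.pos_of_dvd_of_pos (cyclePeriod_dvd hx) hn

theorem exists_relPow (hR : IsStronglyConnected R) (n : ℕ) (x : X) : ∃ y, relPow R n x y := by
  induction n with
  | zero => exact ⟨x, rfl⟩
  | succ n ih =>
    obtain ⟨y, hxy⟩ := ih
    obtain ⟨m, hm, hyy⟩ := hR y y
    obtain ⟨k, rfl⟩ := Nat.exists_eq_add_of_le hm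
    rw [relPow_add] at hyy
    obtain ⟨w, hyw, -⟩ := hyy
    exact ⟨w, relPow_trans hxy hyw⟩

section Phase

theorem natCast_eq_of_relPow (hR : IsStronglyConnected R) (hm : relPow R m x y)
    (hn : relPow R n x y) : (m : ZMod (cyclePeriod R)) = n := by
  obtain ⟨r, -, hr⟩ := hR y x
  have closes {k : ℕ} (hk : relPow R k x y) : (k + r : ZMod (cyclePeriod R)) = 0 := by
    exact_mod_cast (ZMod.natCast_eq_zero_iff _ _).2 (cyclePeriod_dvd (relPow_trans hk hr))
  exact add_right_cancel ((closes hm).trans (closes hn).symm)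

/-- The phase of `x` relative to the base point `x₀`: the length, modulo the period, of a walk from
`x₀` to `x`. The chosen walk does not matter, by `natCast_eq_of_relPow`. -/
noncomputable def phase (hR : IsStronglyConnected R) (x₀ x : X) : ZMod (cyclePeriod R) :=
  (hR x₀ x).choose

theorem phase_eq_natCast (hR : IsStronglyConnected R) (hn : relPow R n x y) :
    hR.phase x y = n :=
  hR.natCast_eq_of_relPow (hR x y).choose_spec.2 hn

theorem phase_eq_phase_add (hR : IsStronglyConnected R) (x₀ : X) (hn : relPow R n x y) :
    hR.phase x₀ y = hR.phase x₀ x + n := by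
  obtain ⟨m, -, hm⟩ := hR x₀ x
  rw [hR.phase_eq_natCast hm, hR.phase_eq_natCast (relPow_trans hm hn), Nat.cast_add]

theorem phase_surjective (hR : IsStronglyConnected R) (x₀ : X) :
    Function.Surjective (hR.phase x₀) := by
  intro a
  have : Nonempty X := ⟨x₀⟩
  have : NeZero (cyclePeriod R) := ⟨hR.cyclePeriod_pos.ne'⟩
  obtain ⟨k, rfl⟩ := ZMod.natCast_zmod_surjective a
  exact (hR.exists_relPow k x₀).imp fun _ => hR.phase_eq_natCast

theorem phase_eq_phase_iff (hR : IsStronglyConnected R) (x₀ : X) :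
    hR.phase x₀ x = hR.phase x₀ y ↔ SameCyclicClass R x y := by
  have key {n : ℕ} (hn : relPow R n x y) :
      hR.phase x₀ x = hR.phase x₀ y ↔ cyclePeriod R ∣ n := by
    rw [hR.phase_eq_phase_add x₀ hn, left_eq_add, ZMod.natCast_eq_zero_iff]
  obtain ⟨m, -, hm⟩ := hR x y
  exact ⟨fun h n hn => (key hn).1 h, fun h => (key hm).2 (h m hm)⟩

theorem equivalence_sameCyclicClass (hR : IsStronglyConnected R) :
    Equivalence (SameCyclicClass R) where
  refl _ _ := cyclePeriod_dvd
  symm {x _} h := (hR.phase_eq_phase_iff x).1 ((hR.phase_eq_phase_iff x).2 h).symm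
  trans {x _ _} hxy hyz := (hR.phase_eq_phase_iff x).1 <|
    ((hR.phase_eq_phase_iff x).2 hxy).trans ((hR.phase_eq_phase_iff x).2 hyz)

theorem sameCyclicClass_of_join (hR : IsStronglyConnected R) (h : Join (relPow R n) x y) :
    SameCyclicClass R x y := by
  obtain ⟨z, hxz, hyz⟩ := h
  refine (hR.phase_eq_phase_iff x).1 (add_right_cancel (b := (n : ZMod (cyclePeriod R))) ?_)
  rw [← hR.phase_eq_phase_add x hxz, ← hR.phase_eq_phase_add x hyz]

end Phase

section LongWalks

theorem setGcd_closedWalkLengths (hR : IsStronglyConnected R) (x : X) :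
    Nat.setGcd (closedWalkLengths R x) = cyclePeriod R := by
  refine Nat.dvd_antisymm (Nat.dvd_setGcd_iff.2 ?_) (Nat.setGcd_mono fun _ hn => ⟨x, hn⟩)
  rintro n ⟨y, hn⟩
  obtain ⟨a, -, ha⟩ := hR x y
  obtain ⟨b, -, hb⟩ := hR y x
  have without_cycle : Nat.setGcd (closedWalkLengths R x) ∣ a + b :=
    Nat.setGcd_dvd_of_mem (relPow_trans ha hb)
  have with_cycle : Nat.setGcd (closedWalkLengths R x) ∣ a + n + b :=
    Nat.setGcd_dvd_of_mem (relPow_trans (relPow_trans ha hn) hb)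
  rwa [add_right_comm, Nat.dvd_add_right without_cycle] at with_cycle

theorem eventually_relPow_self (hR : IsStronglyConnected R) (x : X) :
    ∀ᶠ n in atTop, cyclePeriod R ∣ n → relPow R n x x := by
  obtain ⟨N, hN⟩ := Nat.exists_mem_closure_of_ge (closedWalkLengths R x)
  rw [AddSubmonoid.closure_eq, hR.setGcd_closedWalkLengths] at hN
  exact eventually_atTop.2 ⟨N, hN⟩

theorem eventually_relPow (hR : IsStronglyConnected R) (hm : relPow R m x y) :
    ∀ᶠ n in atTop, m ≡ n [MOD cyclePeriod R] → relPow R n x y := by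
  filter_upwards [(tendsto_sub_atTop_nat m).eventually (hR.eventually_relPow_self y),
    eventually_ge_atTop m] with n hclosed hmn hmod
  rw [← Nat.add_sub_cancel' hmn]
  exact relPow_trans hm (hclosed ((Nat.modEq_iff_dvd' hmn).1 hmod))

theorem join_relPow_mono (hR : IsStronglyConnected R) (hmn : m ≤ n)
    (h : Join (relPow R m) x y) : Join (relPow R n) x y := by
  obtain ⟨z, hxz, hyz⟩ := h
  obtain ⟨k, rfl⟩ := Nat.exists_eq_add_of_le hmn
  exact (hR.exists_relPow k z).imp fun _ hz => ⟨relPow_trans hxz hz, relPow_trans hyz hz⟩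

theorem eventually_join_relPow (hR : IsStronglyConnected R) (h : SameCyclicClass R x y) :
    ∀ᶠ n in atTop, Join (relPow R n) x y := by
  have : Nonempty X := ⟨x⟩
  obtain ⟨m, -, hm⟩ := hR x y
  obtain ⟨n, hn, hxy, hyy⟩ := ((Nat.frequently_modEq hR.cyclePeriod_pos.ne' 0).and_eventually
    ((hR.eventually_relPow hm).and (hR.eventually_relPow_self y))).exists
  have hm0 : m ≡ 0 [MOD cyclePeriod R] := Nat.modEq_zero_iff_dvd.2 (h m hm)
  filter_upwards [eventually_ge_atTop n] with k hk
  exact hR.join_relPow_mono hk ⟨y, hxy (hm0.trans hn.symm), hyy (Nat.modEq_zero_iff_dvd.1 hn)⟩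

end LongWalks

theorem join_relPow_eq_sameCyclicClass (hR : IsStronglyConnected R) (hp : 1 ≤ p)
    (hper : relPow R j = relPow R (j + p)) : Join (relPow R j) = SameCyclicClass R := by
  funext x y
  refine propext ⟨hR.sameCyclicClass_of_join, fun h => ?_⟩
  obtain ⟨N, hN⟩ := eventually_atTop.1 (hR.eventually_join_relPow h)
  rw [← relPow_add_mul_of_periodic hper N]
  exact hN _ ((Nat.le_mul_of_pos_right N hp).trans (Nat.le_add_left _ _))

theorem reflTransGen_join_relPow (hR : IsStronglyConnected R) (hp : 1 ≤ p)
    (hper : relPow R j = relPow R (j + p)) :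
    ReflTransGen (Join (relPow R j)) = SameCyclicClass R := by
  have := hR.equivalence_sameCyclicClass.stdRefl
  have := hR.equivalence_sameCyclicClass.isTrans
  rw [hR.join_relPow_eq_sameCyclicClass hp hper, reflTransGen_eq_self]

theorem exists_surjective_fin_sameCyclicClass [Nonempty X] (hR : IsStronglyConnected R) :
    ∃ f : X → Fin (cyclePeriod R), Function.Surjective f ∧
      ∀ x y, f x = f y ↔ SameCyclicClass R x y := by
  obtain ⟨x₀⟩ := ‹Nonempty X›
  have : NeZero (cyclePeriod R) := ⟨hR.cyclePeriod_pos.ne'⟩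
  let e := (ZMod.finEquiv (cyclePeriod R)).symm
  exact ⟨e ∘ hR.phase x₀, e.surjective.comp (hR.phase_surjective x₀),
    fun x y => e.injective.eq_iff.trans (hR.phase_eq_phase_iff x₀)⟩

end IsStronglyConnected

end CyclicClasses

theorem stmt14_general {X : Type*} [Nonempty X] (R : X → X → Prop)
    (hsc : ∀ x y : X, ∃ n : ℕ, 1 ≤ n ∧ relPow R n x y)
    (j : ℕ) (hjper : ∃ p : ℕ, 1 ≤ p ∧ relPow R j = relPow R (j + p))
    (q : ℕ) (hqdvd : ∀ n : ℕ, 1 ≤ n → (∃ x, relPow R n x x) → q ∣ n)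
    (hqmax : ∀ d : ℕ, (∀ n : ℕ, 1 ≤ n → (∃ x, relPow R n x x) → d ∣ n) → d ∣ q) :
    (∀ x y : X, (∀ n : ℕ, relPow R n x y → q ∣ n) ↔
      Relation.ReflTransGen (fun a b => ∃ z, relPow R j a z ∧ relPow R j b z) x y) ∧
    (∃ f : X → Fin q, Function.Surjective f ∧
      ∀ x y : X, f x = f y ↔ (∀ n : ℕ, relPow R n x y → q ∣ n)) := by
  have hR : IsStronglyConnected R := hsc
  obtain ⟨p, hp, hper⟩ := hjper
  obtain rfl : q = cyclePeriod R := eq_cyclePeriod hqdvd hqmax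
  have components := hR.reflTransGen_join_relPow hp hper
  exact ⟨fun x y => (iff_of_eq (congrFun₂ components x y)).symm,
    hR.exists_surjective_fin_sameCyclicClass⟩

theorem stmt14 {X : Type*} [Fintype X] [Nonempty X] (R : X → X → Prop)
    (hsc : ∀ x y : X, ∃ n : ℕ, 1 ≤ n ∧ relPow R n x y)
    (j : ℕ) (hj : 1 ≤ j)
    (hjper : ∃ p : ℕ, 1 ≤ p ∧ relPow R j = relPow R (j + p))
    (hjleast : ∀ j' : ℕ, 1 ≤ j' → (∃ p : ℕ, 1 ≤ p ∧ relPow R j' = relPow R (j' + p)) → j ≤ j')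
    (q : ℕ) (hq : 1 ≤ q)
    (hqdvd : ∀ n : ℕ, 1 ≤ n → (∃ x, relPow R n x x) → q ∣ n)
    (hqmax : ∀ d : ℕ, (∀ n : ℕ, 1 ≤ n → (∃ x, relPow R n x x) → d ∣ n) → d ∣ q) :
    (∀ x y : X, (∀ n : ℕ, relPow R n x y → q ∣ n) ↔
      Relation.ReflTransGen (fun a b => ∃ z, relPow R j a z ∧ relPow R j b z) x y) ∧
    (∃ f : X → Fin q, Function.Surjective f ∧
      ∀ x y : X, f x = f y ↔ (∀ n : ℕ, relPow R n x y → q ∣ n)) :=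
  stmt14_general R hsc j hjper q hqdvd hqmax
end
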